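/- arXiv:1711.06777 — 2 statements merged into one kernel-verified Lean document; each statement's English description precedes it below -/
import Mathlib

section
/- Let 0 < α < 1, b > 0, let G : ℝ → ℝ be continuous, and let x : ℕ → ℝ satisfy x_{n+1} = x₀ − b · Σ_{s=0}^{n} (Γ(n−s+α)/Γ(n−s+1)) · G(x_s) for all n ≥ 0. Suppose the odd subsequence x_{2n+1} converges to x_o and the even subsequence x_{2n} converges to x_e as n → ∞. Then x_o − x_e = b · (G(x_o) − G(x_e)) · W^Δ_α, where W^Δ_α = Σ_{n=1}^{∞} (Γ(2n−2+α)/Γ(2n−1) − Γ(2n−1+α)/Γ(2n)). -/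
/-!
Write `k j = Γ(j + α) / Γ(j + 1)` and let `c 0 = k 0`, `c (j + 1) = k (j + 1) - k j` be its
backward differences. Subtracting consecutive instances of the recursion gives the convolution
`x (n + 1) - x n = -b * ∑_{j ≤ n} c j * G (x (n - j))`. Since `k` decreases to `0`
(`kernel_antitone`, `kernel_tendsto_zero`), `c` is absolutely summable with sum `0`
(`hasSum_backwardDiff`). Dominated convergence along even `n` (`tendsto_even_convolution`)
turns the right-hand side into `-b * (G xe * E + G xo * O)`, where `E` and `O` are the sums of `c`
over even and odd indices. Finally `O = -W` by definition of `W`, and `E + O = 0` forces `E = W`.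
-/

open Filter Topology

/-- The memory kernel `Γ(j + α) / Γ(j + 1)`, that is `U_α(j + 1)`. -/
noncomputable def kernel (α : ℝ) (j : ℕ) : ℝ :=
  Real.Gamma ((j : ℝ) + α) / Real.Gamma ((j : ℝ) + 1)

/-- Backward differences of a sequence, extended by `0` to negative indices. -/
def backwardDiff (k : ℕ → ℝ) : ℕ → ℝ
  | 0 => k 0
  | j + 1 => k (j + 1) - k j

lemma kernel_nonneg {α : ℝ} (h0 : 0 < α) (j : ℕ) : 0 ≤ kernel α j :=
  div_nonneg (Real.Gamma_pos_of_pos (by positivity)).le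
    (Real.Gamma_pos_of_pos (by positivity)).le

lemma kernel_antitone {α : ℝ} (h0 : 0 < α) (h1 : α < 1) : Antitone (kernel α) := by
  refine antitone_nat_of_succ_le fun j => ?_
  have hj : (0 : ℝ) < (j : ℝ) + 1 := by positivity
  have e : kernel α (j + 1) = ((j : ℝ) + α) / ((j : ℝ) + 1) * kernel α j := by
    unfold kernel
    rw [show ((j + 1 : ℕ) : ℝ) + α = ((j : ℝ) + α) + 1 by push_cast; ring,
      Real.Gamma_add_one (by positivity), Nat.cast_succ, Real.Gamma_add_one hj.ne']
    exact mul_div_mul_comm _ _ _ _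
  rw [e]
  exact mul_le_of_le_one_left (kernel_nonneg h0 j) ((div_le_one hj).2 (by linarith))

/-- Log-convexity of `Γ` between `j` and `j + 1` gives the bound `k j ≤ j ^ (α - 1)`. -/
lemma kernel_tendsto_zero {α : ℝ} (h0 : 0 < α) (h1 : α < 1) :
    Tendsto (kernel α) atTop (𝓝 0) := by
  have hlim : Tendsto (fun j : ℕ => (j : ℝ) ^ (-(1 - α))) atTop (𝓝 0) :=
    (tendsto_rpow_neg_atTop (by linarith)).comp tendsto_natCast_atTop_atTop
  refine squeeze_zero' (Eventually.of_forall (kernel_nonneg h0)) ?_ hlim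
  filter_upwards [eventually_gt_atTop 0] with j hj
  have hj : (0 : ℝ) < j := by exact_mod_cast hj
  have hG : 0 < Real.Gamma j := Real.Gamma_pos_of_pos hj
  have h := Real.Gamma_mul_add_mul_le_rpow_Gamma_mul_rpow_Gamma (s := (j : ℝ) + 1) (t := j)
    (a := α) (b := 1 - α) (by positivity) hj h0 (by linarith) (by ring)
  rw [show α * ((j : ℝ) + 1) + (1 - α) * j = j + α by ring, Real.Gamma_add_one hj.ne',
    Real.mul_rpow hj.le hG.le, mul_assoc, ← Real.rpow_add hG, add_sub_cancel,
    Real.rpow_one] at h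
  unfold kernel
  rw [Real.Gamma_add_one hj.ne', div_le_iff₀ (by positivity), ← mul_assoc,
    show -(1 - α) = α - 1 by ring, Real.rpow_sub_one hj.ne', div_mul_cancel₀ _ hj.ne']
  exact h

lemma hasSum_backwardDiff {k : ℕ → ℝ} (hk : Antitone k) (hk0 : Tendsto k atTop (𝓝 0)) :
    HasSum (backwardDiff k) 0 := by
  have h : HasSum (fun j => k j - k (j + 1)) (k 0) := by
    rw [hasSum_iff_tendsto_nat_of_nonneg fun j => sub_nonneg.2 (hk j.le_succ)]
    simp_rw [Finset.sum_range_sub']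
    simpa using hk0.const_sub (k 0)
  rw [← hasSum_nat_add_iff' 1]
  simpa [backwardDiff] using h.neg

/-- Summation by parts: differencing a convolution with `k` is convolving with the backward
differences of `k`. -/
lemma convolution_sub (k g : ℕ → ℝ) (n : ℕ) :
    ∑ s ∈ Finset.range (n + 2), k (n + 1 - s) * g s - ∑ s ∈ Finset.range (n + 1), k (n - s) * g s
      = ∑ j ∈ Finset.range (n + 2), backwardDiff k j * g (n + 1 - j) := by
  rw [← Finset.sum_range_reflect (fun j => backwardDiff k j * g (n + 1 - j)),
    Finset.sum_range_succ _ (n + 1), Finset.sum_range_succ _ (n + 1), add_sub_right_comm,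
    ← Finset.sum_sub_distrib]
  congr 1
  · refine Finset.sum_congr rfl fun s hs => ?_
    have hs : s ≤ n := Nat.lt_succ_iff.1 (Finset.mem_range.1 hs)
    rw [show n + 2 - 1 - s = (n - s) + 1 by omega, show n + 1 - (n - s + 1) = s by omega,
      show n + 1 - s = (n - s) + 1 by omega]
    simp only [backwardDiff]
    ring
  · simp [backwardDiff]

/-- Dominated convergence for the convolution of a summable sequence with an asymptotically
2-periodic one, along even indices. -/
lemma tendsto_even_convolution {c g : ℕ → ℝ} (hc : Summable c) {go ge : ℝ}
    (ho : Tendsto (fun n => g (2 * n + 1)) atTop (𝓝 go))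
    (he : Tendsto (fun n => g (2 * n)) atTop (𝓝 ge)) :
    Tendsto (fun m => ∑ j ∈ Finset.range (2 * m + 1), c j * g (2 * m - j)) atTop
      (𝓝 (ge * (∑' n, c (2 * n)) + go * ∑' n, c (2 * n + 1))) := by
  obtain ⟨M, hM⟩ : ∃ M, ∀ n, |g n| ≤ M := by
    obtain ⟨A, hA⟩ := (Metric.isBounded_range_of_tendsto _ ho).exists_norm_le
    obtain ⟨B, hB⟩ := (Metric.isBounded_range_of_tendsto _ he).exists_norm_le
    refine ⟨max A B, fun n => ?_⟩
    obtain ⟨m, rfl | rfl⟩ := n.even_or_odd'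
    · exact (hB _ ⟨m, rfl⟩).trans (le_max_right _ _)
    · exact (hA _ ⟨m, rfl⟩).trans (le_max_left _ _)
  have hM0 : 0 ≤ M := (abs_nonneg _).trans (hM 0)
  have hce : Summable fun n => c (2 * n) :=
    hc.comp_injective (i := fun n => 2 * n) fun a b h => by simpa using h
  have hco : Summable fun n => c (2 * n + 1) :=
    hc.comp_injective (i := fun n => 2 * n + 1) fun a b h => by simpa using h
  let L : ℕ → ℝ := fun j => c j * if Even j then ge else go
  have hL : ∑' j, L j = ge * (∑' n, c (2 * n)) + go * ∑' n, c (2 * n + 1) := by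
    have e1 : (fun n => L (2 * n)) = fun n => ge * c (2 * n) := by
      funext n; simp [L, mul_comm]
    have e2 : (fun n => L (2 * n + 1)) = fun n => go * c (2 * n + 1) := by
      funext n; simp [L, mul_comm go]
    rw [← tsum_even_add_odd (f := L) (e1 ▸ hce.mul_left ge) (e2 ▸ hco.mul_left go), e1, e2,
      tsum_mul_left, tsum_mul_left]
  have hsum : ∀ m, ∑ j ∈ Finset.range (2 * m + 1), c j * g (2 * m - j)
      = ∑' j, if j < 2 * m + 1 then c j * g (2 * m - j) else 0 := fun m => by
    rw [tsum_eq_sum (s := Finset.range (2 * m + 1)) fun j hj =>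
      if_neg (by simpa using hj)]
    exact Finset.sum_congr rfl fun j hj => (if_pos (Finset.mem_range.1 hj)).symm
  simp_rw [hsum]
  rw [← hL]
  refine tendsto_tsum_of_dominated_convergence (bound := fun j => |c j| * M)
    (hc.abs.mul_right M) (fun j => ?_) (Eventually.of_forall fun m j => ?_)
  · have hg : Tendsto (fun m => g (2 * m - j)) atTop (𝓝 (if Even j then ge else go)) := by
      obtain ⟨i, rfl | rfl⟩ := j.even_or_odd'
      · simp only [even_two, Even.mul_right, if_true]
        refine (he.comp (tendsto_sub_atTop_nat i)).congr fun m => ?_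
        simp only [Function.comp, Nat.mul_sub]
      · rw [if_neg (by simp)]
        refine (ho.comp (tendsto_sub_atTop_nat (i + 1))).congr' ?_
        filter_upwards [eventually_ge_atTop (i + 1)] with m hm
        simp only [Function.comp]
        congr 1
        omega
    refine (hg.const_mul (c j)).congr' ?_
    filter_upwards [eventually_ge_atTop j] with m hm
    rw [if_pos (by omega)]
  · split_ifs
    · rw [Real.norm_eq_abs, abs_mul]
      exact mul_le_mul_of_nonneg_left (hM _) (abs_nonneg _)
    · simpa using mul_nonneg (abs_nonneg (c j)) hM0


/-- For the fractional difference (Caputo-like) universal map of order `0 < α < 1`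
with falling-factorial memory kernel `U_α(j) = Γ(j+α−1)/Γ(j)`, an asymptotic period-2
sink `(x_o, x_e)` satisfies `x_o − x_e = b (G(x_o) − G(x_e)) W^Δ_α` where
`W^Δ_α = Σ_{n=1}^∞ (Γ(2n−2+α)/Γ(2n−1) − Γ(2n−1+α)/Γ(2n))`. -/
theorem period_two_difference_eq_fracDiff (α b : ℝ) (h0 : 0 < α) (h1 : α < 1) (hb : 0 < b)
    (G : ℝ → ℝ) (hG : Continuous G) (x : ℕ → ℝ)
    (hx : ∀ n : ℕ, x (n + 1) = x 0 -
      b * ∑ s ∈ Finset.range (n + 1),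
        (Real.Gamma (((n - s : ℕ) : ℝ) + α) / Real.Gamma (((n - s : ℕ) : ℝ) + 1)) * G (x s))
    (xo xe : ℝ)
    (ho : Filter.Tendsto (fun n : ℕ => x (2 * n + 1)) Filter.atTop (nhds xo))
    (he : Filter.Tendsto (fun n : ℕ => x (2 * n)) Filter.atTop (nhds xe)) :
    xo - xe = b * (G xo - G xe) *
      ∑' n : ℕ, (Real.Gamma (2 * (n : ℝ) + α) / Real.Gamma (2 * (n : ℝ) + 1) -
        Real.Gamma (2 * (n : ℝ) + 1 + α) / Real.Gamma (2 * (n : ℝ) + 2)) := by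
  set k := kernel α with hk
  have hc := hasSum_backwardDiff (kernel_antitone h0 h1) (kernel_tendsto_zero h0 h1)
  rw [← hk] at hc
  have hx' : ∀ n, x (n + 1) = x 0 - b * ∑ s ∈ Finset.range (n + 1), k (n - s) * G (x s) := hx
  have hW : (∑' n : ℕ, (Real.Gamma (2 * (n : ℝ) + α) / Real.Gamma (2 * (n : ℝ) + 1) -
      Real.Gamma (2 * (n : ℝ) + 1 + α) / Real.Gamma (2 * (n : ℝ) + 2)))
      = -∑' n, backwardDiff k (2 * n + 1) := by
    rw [← tsum_neg]
    refine tsum_congr fun n => ?_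
    simp only [backwardDiff, hk, kernel]
    push_cast
    rw [add_assoc (2 * (n : ℝ)) 1 1, one_add_one_eq_two]
    ring
  have hEO : ∑' n, backwardDiff k (2 * n) + ∑' n, backwardDiff k (2 * n + 1) = 0 := by
    rw [tsum_even_add_odd
      (hc.summable.comp_injective (i := fun n => 2 * n) fun a b h => by simpa using h)
      (hc.summable.comp_injective (i := fun n => 2 * n + 1) fun a b h => by simpa using h),
      hc.tsum_eq]
  have hlim := (tendsto_even_convolution (g := fun n => G (x n)) hc.summable
    ((hG.tendsto xo).comp ho) ((hG.tendsto xe).comp he)).const_mul (-b)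
  have hdiff : (fun m => -b * ∑ j ∈ Finset.range (2 * m + 1),
      backwardDiff k j * G (x (2 * m - j))) =ᶠ[atTop] fun m => x (2 * m + 1) - x (2 * m) := by
    filter_upwards [eventually_gt_atTop 0] with m hm
    obtain ⟨n, hn⟩ : ∃ n, 2 * m = n + 1 := ⟨2 * m - 1, by omega⟩
    rw [hn, hx' (n + 1), hx' n, ← convolution_sub k (fun n => G (x n)) n]
    ring
  have key := tendsto_nhds_unique (ho.sub he) (hlim.congr' hdiff)
  rw [key, hW, eq_neg_of_add_eq_zero_left hEO]
  ring
end

section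
/- Let 0 < α < 1, b > 0, let G : ℝ → ℝ be continuous, and let x : ℕ → ℝ satisfy x_{n+1} = x₀ − b · Σ_{s=0}^{n} (Γ(n−s+α)/Γ(n−s+1)) · G(x_s) for all n ≥ 0. Suppose the odd subsequence x_{2n+1} converges to x_o and the even subsequence x_{2n} converges to x_e as n → ∞. Then G(x_o) + G(x_e) = 0. -/
/-!
Write `k j = Γ(j+α)/Γ(j+1)` and `g s = G (x s)`. Adding the recursion at two consecutive times gives
`Σ_{s ≤ n} k (n-s) (g s + g (s+1)) + k (n+1) g 0 = (2 x 0 - (x (n+1) + x (n+2))) / b`,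
whose right-hand side is bounded because `x n + x (n+1)` converges. Since
`g s + g (s+1) → S := G xo + G xe`, while the kernel `k` is positive and bounded with divergent sum,
the convolution on the left would be unbounded above if `S > 0` and unbounded below if `S < 0`
(`limit_nonpos_of_conv_bddAbove`, applied to both signs). Divergence of `Σ k j` is elementary:
`j * k j` is nondecreasing because `(j+1) k (j+1) = (j+α) k j`, so `k` dominates a multiple of the
harmonic series.
-/

open Filter Topology

/-- The memory kernel `Γ(j+α)/Γ(j+1)`, that is `U_α (j+1)`. -/
noncomputable def memKer (α : ℝ) (j : ℕ) : ℝ := Real.Gamma ((j : ℝ) + α) / Real.Gamma ((j : ℝ) + 1)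

lemma memKer_pos {α : ℝ} (h0 : 0 < α) (j : ℕ) : 0 < memKer α j :=
  div_pos (Real.Gamma_pos_of_pos (by positivity)) (Real.Gamma_pos_of_pos (by positivity))

lemma memKer_succ {α : ℝ} (h0 : 0 < α) (j : ℕ) :
    ((j : ℝ) + 1) * memKer α (j + 1) = ((j : ℝ) + α) * memKer α j := by
  have e1 : Real.Gamma (((j + 1 : ℕ) : ℝ) + α) = ((j : ℝ) + α) * Real.Gamma ((j : ℝ) + α) := by
    rw [← Real.Gamma_add_one (by positivity)]; congr 1; push_cast; ring
  have e2 : Real.Gamma (((j + 1 : ℕ) : ℝ) + 1) = ((j : ℝ) + 1) * Real.Gamma ((j : ℝ) + 1) := by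
    rw [← Real.Gamma_add_one (by positivity)]; push_cast; rfl
  have h : Real.Gamma ((j : ℝ) + 1) ≠ 0 := (Real.Gamma_pos_of_pos (by positivity)).ne'
  have hj : (j : ℝ) + 1 ≠ 0 := by positivity
  unfold memKer
  rw [e1, e2]
  field_simp

lemma memKer_le_zero {α : ℝ} (h0 : 0 < α) (h1 : α < 1) (j : ℕ) : memKer α j ≤ memKer α 0 := by
  induction j with
  | zero => exact le_rfl
  | succ j ih =>
    refine le_trans ?_ ih
    have h := memKer_succ h0 j
    have hp := memKer_pos h0 j
    have hj : (0 : ℝ) < (j : ℝ) + 1 := by positivity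
    refine le_of_mul_le_mul_left ?_ hj
    rw [h]
    gcongr

/-- `(j+1) k (j+1)` is nondecreasing in `j`, hence bounded below by its value at `j = 0`. -/
lemma memKer_one_le {α : ℝ} (h0 : 0 < α) (j : ℕ) :
    memKer α 1 ≤ ((j : ℝ) + 1) * memKer α (j + 1) := by
  induction j with
  | zero => simp
  | succ j ih =>
    have h := memKer_succ h0 (j + 1)
    have hp := memKer_pos h0 (j + 1)
    rw [h]
    push_cast
    nlinarith

lemma memKer_not_summable {α : ℝ} (h0 : 0 < α) : ¬ Summable (memKer α) := by
  intro hs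
  have hs1 : Summable (fun j => memKer α (j + 1)) := (summable_nat_add_iff 1).2 hs
  have hp := memKer_pos h0 1
  have h2 : Summable (fun j : ℕ => memKer α 1 * (1 / ((j + 1 : ℕ) : ℝ))) := by
    refine Summable.of_nonneg_of_le (fun j => by positivity) (fun j => ?_) hs1
    have := memKer_one_le h0 j
    have hj : (0 : ℝ) < ((j + 1 : ℕ) : ℝ) := by positivity
    rw [mul_one_div, div_le_iff₀ hj]
    push_cast
    linarith
  have h3 := (summable_mul_left_iff hp.ne').1 h2
  exact Real.not_summable_one_div_natCast
    ((summable_nat_add_iff (f := fun n : ℕ => 1 / (n : ℝ)) 1).1 h3)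

/-- If `h → S` and the convolution of `h` with a nonnegative, bounded, non-summable kernel is
bounded above, then `S ≤ 0`: otherwise the tail of `h` stays above `S / 2` and its contribution
diverges, while the finitely many initial terms contribute a bounded amount. -/
lemma limit_nonpos_of_conv_bddAbove {k h : ℕ → ℝ} {S K C : ℝ} (hk : ∀ j, 0 ≤ k j)
    (hK : ∀ j, k j ≤ K) (hsum : ¬ Summable k) (hh : Tendsto h atTop (𝓝 S))
    (hC : ∀ n, ∑ s ∈ Finset.range (n + 1), k (n - s) * h s ≤ C) : S ≤ 0 := by
  by_contra! hS
  obtain ⟨N, hN⟩ := eventually_atTop.1 (hh.eventually_const_le (half_lt_self hS))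
  have hdiv := (not_summable_iff_tendsto_nat_atTop_of_nonneg hk).1 hsum
  set B := K * ∑ s ∈ Finset.range N, |h s| with hB
  obtain ⟨m, hm⟩ := ((tendsto_add_atTop_iff_nat 1).2 hdiv).eventually_gt_atTop
    ((C + B) / (S / 2)) |>.exists
  rw [div_lt_iff₀ (half_pos hS)] at hm
  have h1 := hC (N + m)
  rw [add_assoc, Finset.sum_range_add] at h1
  have h2 : -B ≤ ∑ s ∈ Finset.range N, k (N + m - s) * h s := by
    rw [hB, Finset.mul_sum, ← Finset.sum_neg_distrib]
    refine Finset.sum_le_sum fun s _ => ?_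
    have a1 := mul_le_mul_of_nonneg_right (hK (N + m - s)) (abs_nonneg (h s))
    have a2 := mul_le_mul_of_nonneg_left (neg_abs_le (h s)) (hk (N + m - s))
    linarith
  have h3 : (∑ i ∈ Finset.range (m + 1), k i) * (S / 2)
      ≤ ∑ i ∈ Finset.range (m + 1), k (N + m - (N + i)) * h (N + i) := by
    rw [← Finset.sum_range_reflect, Finset.sum_mul]
    refine Finset.sum_le_sum fun i _ => ?_
    have e : N + m - (N + i) = m + 1 - 1 - i := by omega
    rw [e]
    exact mul_le_mul_of_nonneg_left (hN _ (Nat.le_add_right _ _)) (hk _)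
  linarith

lemma tendsto_add_succ_of_even_odd {u : ℕ → ℝ} {a c : ℝ}
    (he : Tendsto (fun n : ℕ => u (2 * n)) atTop (𝓝 a))
    (ho : Tendsto (fun n : ℕ => u (2 * n + 1)) atTop (𝓝 c)) :
    Tendsto (fun n => u n + u (n + 1)) atTop (𝓝 (c + a)) := by
  have h1 := ho.add he
  have h2 := ho.add ((tendsto_add_atTop_iff_nat 1).2 he)
  rw [Metric.tendsto_atTop] at h1 h2 ⊢
  intro ε hε
  obtain ⟨N1, hN1⟩ := h1 ε hε
  obtain ⟨N2, hN2⟩ := h2 ε hε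
  refine ⟨2 * (N1 + N2), fun n hn => ?_⟩
  obtain ⟨m, rfl | rfl⟩ := Nat.even_or_odd' n
  · have := hN1 m (by omega)
    rwa [add_comm (u (2 * m + 1))] at this
  · exact hN2 m (by omega)

/-- For the fractional difference (Caputo-like) universal map of order `0 < α < 1`
with falling-factorial memory kernel `U_α(j) = Γ(j+α−1)/Γ(j)`, an asymptotic period-2
sink `(x_o, x_e)` satisfies `G(x_o) + G(x_e) = 0`. -/
theorem period_two_sum_eq_zero_fracDiff (α b : ℝ) (h0 : 0 < α) (h1 : α < 1) (hb : 0 < b)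
    (G : ℝ → ℝ) (hG : Continuous G) (x : ℕ → ℝ)
    (hx : ∀ n : ℕ, x (n + 1) = x 0 -
      b * ∑ s ∈ Finset.range (n + 1),
        (Real.Gamma (((n - s : ℕ) : ℝ) + α) / Real.Gamma (((n - s : ℕ) : ℝ) + 1)) * G (x s))
    (xo xe : ℝ)
    (ho : Filter.Tendsto (fun n : ℕ => x (2 * n + 1)) Filter.atTop (nhds xo))
    (he : Filter.Tendsto (fun n : ℕ => x (2 * n)) Filter.atTop (nhds xe)) :
    G xo + G xe = 0 := by
  have hx' : ∀ n : ℕ, x (n + 1) = x 0 -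
      b * ∑ s ∈ Finset.range (n + 1), memKer α (n - s) * G (x s) := hx
  have hg : Tendsto (fun n => G (x n) + G (x (n + 1))) atTop (𝓝 (G xo + G xe)) :=
    tendsto_add_succ_of_even_odd (u := fun n => G (x n))
      ((hG.tendsto xe).comp he) ((hG.tendsto xo).comp ho)
  have hxs := tendsto_add_succ_of_even_odd he ho
  obtain ⟨R, hR⟩ := (Metric.isBounded_range_of_tendsto _ hxs).exists_norm_le
  have hR' : ∀ n, |x n + x (n + 1)| ≤ R := fun n => hR _ ⟨n, rfl⟩
  have key : ∀ n, ∑ s ∈ Finset.range (n + 1), memKer α (n - s) * (G (x s) + G (x (s + 1)))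
      = (2 * x 0 - (x (n + 1) + x (n + 1 + 1))) / b - memKer α (n + 1) * G (x 0) := by
    intro n
    have e1 := hx' n
    have e2 := hx' (n + 1)
    rw [Finset.sum_range_succ'] at e2
    simp only [Nat.add_sub_add_right, Nat.sub_zero] at e2
    simp only [mul_add, Finset.sum_add_distrib]
    rw [eq_sub_iff_add_eq, eq_div_iff hb.ne']
    linarith
  have bound : ∀ n, |∑ s ∈ Finset.range (n + 1), memKer α (n - s) * (G (x s) + G (x (s + 1)))|
      ≤ (2 * |x 0| + R) / b + memKer α 0 * |G (x 0)| := by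
    intro n
    rw [key]
    refine (abs_sub _ _).trans (add_le_add ?_ ?_)
    · rw [abs_div, abs_of_pos hb]
      gcongr
      refine (abs_sub _ _).trans (add_le_add ?_ (hR' _))
      rw [abs_mul, abs_two]
    · rw [abs_mul, abs_of_pos (memKer_pos h0 _)]
      gcongr
      exact memKer_le_zero h0 h1 _
  have hk : ∀ j, 0 ≤ memKer α j := fun j => (memKer_pos h0 j).le
  have up := limit_nonpos_of_conv_bddAbove hk (memKer_le_zero h0 h1) (memKer_not_summable h0) hg
    (fun n => (le_abs_self _).trans (bound n))
  have dn := limit_nonpos_of_conv_bddAbove hk (memKer_le_zero h0 h1) (memKer_not_summable h0)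
    hg.neg (fun n => by
      simp only [mul_neg, Finset.sum_neg_distrib]
      exact (neg_le_abs _).trans (bound n))
  linarith
end
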